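/- Let R be a principal ideal domain whose field of fractions has characteristic different from 2, and let f and g be nondegenerate quadratic forms in 3 variables that are integral over R. Then f and g are similar over R (there is a unit u ∈ Rˣ such that u·f is isometric to g) if and only if the even Clifford algebras C₀(f) and C₀(g) are isomorphic as R-algebras. -/

import Mathlib

/-- The Gram matrix `M_f` of a quadratic form `f` in `n` variables: the matrix of the polar
bilinear form `B_f(x, y) = f(x + y) - f(x) - f(y)` in the standard basis. -/
noncomputable def gramMatrix {R : Type*} [CommRing R] {n : ℕ}
    (f : QuadraticForm R (Fin n → R)) : Matrix (Fin n) (Fin n) R :=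
  Matrix.of fun i j => QuadraticMap.polar f (Pi.single i 1) (Pi.single j 1)

/-!
Write `f x = x ⬝ᵥ B *ᵥ x` for a square matrix `B`, not necessarily symmetric. In `C₀(f)` the product
of two vectors `x`, `y` is the sum of the scalar `x ⬝ᵥ B *ᵥ y` and an alternating function of
`(x, y)`, which in three variables is a linear function of `x ⨯₃ y`. Hence `C₀(f)` is `R ⊕ R³`, with
`x y` corresponding to `(x ⬝ᵥ B *ᵥ y, x ⨯₃ y)`, and its multiplication is forced by the Clifford
relation `(x y) (y z) = f(y) x z`.

The form can be read off from this algebra: any two elements with vector parts `v`, `w` satisfy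
`(v ⨯₃ w) ⬝ᵥ im (product) = -f (v ⨯₃ w)`. An algebra isomorphism `C₀(f) ≃ C₀(g)` induces an
invertible matrix `P` on `C₀ / R ≃ R³`, and `(P v) ⨯₃ (P w) = adj(P)ᵀ (v ⨯₃ w)` turns the identity
into `det P • f = g ∘ adj(P)ᵀ`, a similarity. Conversely, if `g ∘ e = u f` with `e` linear bijective
and `u` a unit, then `x y ↦ u⁻¹ e(x) e(y)` defines an isomorphism `C₀(f) ≃ C₀(g)`.
-/

namespace TernaryClifford

open Matrix CliffordAlgebra

section QuadraticMap

variable {R M N ι n : Type*} [CommRing R] [AddCommGroup M] [Module R M] [AddCommGroup N]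
  [Module R N]

theorem quadraticMap_ext_basis (b : Module.Basis ι R M) {f g : QuadraticMap R M N}
    (h_basis : ∀ i, f (b i) = g (b i)) (h_add : ∀ i j, i ≠ j → f (b i + b j) = g (b i + b j)) :
    f = g := by
  have h_polar : f.polarBilin = g.polarBilin := by
    refine LinearMap.ext_basis b b fun i j ↦ ?_
    simp only [QuadraticMap.polarBilin_apply_apply]
    rcases eq_or_ne i j with rfl | hij
    · rw [QuadraticMap.polar_self, QuadraticMap.polar_self, h_basis]
    · rw [QuadraticMap.polar, QuadraticMap.polar, h_add i j hij, h_basis, h_basis]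
  ext x
  induction b.mem_span x using Submodule.span_induction with
  | mem _ hx => obtain ⟨i, rfl⟩ := hx; exact h_basis i
  | zero => simp
  | add x y _ _ hx hy =>
    rw [QuadraticMap.map_add f, QuadraticMap.map_add g, hx, hy]
    exact congrArg _ (LinearMap.congr_fun₂ h_polar x y)
  | smul r x _ hx => rw [QuadraticMap.map_smul, QuadraticMap.map_smul, hx]

variable [Fintype n] [DecidableEq n]

theorem toQuadraticForm'_apply (B : Matrix n n R) (x : n → R) :
    B.toQuadraticForm' x = x ⬝ᵥ B *ᵥ x :=
  toLinearMap₂'_apply' B x x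

theorem toQuadraticForm'_surjective :
    Function.Surjective (toQuadraticForm' : Matrix n n R → QuadraticForm R (n → R)) := by
  intro f
  obtain ⟨β, rfl⟩ := LinearMap.BilinMap.toQuadraticMap_surjective f
  exact ⟨LinearMap.toMatrix₂' R β, by rw [toQuadraticForm', toLinearMap₂'_toMatrix']⟩

end QuadraticMap

section CrossProduct

variable {R : Type*} [CommRing R]

theorem mulVec_cross_mulVec (A : Matrix (Fin 3) (Fin 3) R) (p q : Fin 3 → R) :
    (A *ᵥ p) ⨯₃ (A *ᵥ q) = A.adjugateᵀ *ᵥ (p ⨯₃ q) := by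
  ext i
  fin_cases i <;>
    simp only [Fin.zero_eta, Fin.mk_one, Fin.reduceFinMk, cross_apply, mulVec, dotProduct,
      Fin.sum_univ_three, adjugate_fin_three, transpose_apply, of_apply, cons_val', cons_val] <;>
    ring

theorem mulVec_cross_mulVec_dotProduct (A : Matrix (Fin 3) (Fin 3) R) (p q r : Fin 3 → R) :
    (A *ᵥ p) ⨯₃ (A *ᵥ q) ⬝ᵥ A *ᵥ r = A.det * (p ⨯₃ q ⬝ᵥ r) := by
  rw [mulVec_cross_mulVec, mulVec_transpose, ← dotProduct_mulVec, mulVec_mulVec, adjugate_mul,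
    smul_mulVec, one_mulVec, dotProduct_smul, smul_eq_mul]

theorem exists_cross_eq_of_apply_eq_one {z : Fin 3 → R} {i : Fin 3} (hz : z i = 1) :
    ∃ p q, p ⨯₃ q = z := by
  fin_cases i
  · refine ⟨![-z 1, 1, 0], ![-z 2, 0, 1], ?_⟩
    ext k; fin_cases k <;> simp_all [cross_apply]
  · refine ⟨![0, -z 2, 1], ![1, -z 0, 0], ?_⟩
    ext k; fin_cases k <;> simp_all [cross_apply]
  · refine ⟨![1, 0, -z 0], ![0, 1, -z 1], ?_⟩
    ext k; fin_cases k <;> simp_all [cross_apply]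

theorem exists_cross_eq_single_and_cross_eq_single (i j : Fin 3) :
    ∃ x y z : Fin 3 → R, x ⨯₃ y = Pi.single i 1 ∧ y ⨯₃ z = Pi.single j 1 := by
  obtain ⟨k, hki, hkj⟩ : ∃ k, k ≠ i ∧ k ≠ j := by decide +revert
  refine ⟨Pi.single k 1 ⨯₃ Pi.single i 1, Pi.single k 1, Pi.single j 1 ⨯₃ Pi.single k 1, ?_, ?_⟩
  · simp [cross_cross_eq_smul_sub_smul, hki]
  · simp [cross_cross_eq_smul_sub_smul', hkj]

theorem isAlt_apply_eq_sum_cross {N : Type*} [AddCommGroup N] [Module R N]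
    {D : (Fin 3 → R) →ₗ[R] (Fin 3 → R) →ₗ[R] N} (hD : D.IsAlt) (x y : Fin 3 → R) :
    D x y = ∑ i, (x ⨯₃ y) i • D (Pi.single (i + 1) 1) (Pi.single (i + 2) 1) := by
  have h_expand (v : Fin 3 → R) :
      v = v 0 • Pi.single 0 1 + v 1 • Pi.single 1 1 + v 2 • Pi.single 2 1 := by
    ext i; fin_cases i <;> simp
  conv_lhs => rw [h_expand x, h_expand y]
  simp only [map_add, map_smul, LinearMap.add_apply, LinearMap.smul_apply, hD.self_eq_zero,
    ← hD.neg (Pi.single 0 1) (Pi.single 1 1), ← hD.neg (Pi.single 1 1) (Pi.single 2 1),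
    ← hD.neg (Pi.single 2 1) (Pi.single 0 1), Fin.sum_univ_three, cross_apply, cons_val,
    zero_add, Fin.reduceAdd]
  module

theorem triple_product_smul (x y z v : Fin 3 → R) :
    (x ⬝ᵥ y ⨯₃ z) • v =
      (v ⬝ᵥ x) • y ⨯₃ z + (v ⬝ᵥ y) • z ⨯₃ x + (v ⬝ᵥ z) • x ⨯₃ y := by
  ext i
  fin_cases i <;>
    simp only [Fin.zero_eta, Fin.mk_one, Fin.reduceFinMk, cross_apply, dotProduct,
      Fin.sum_univ_three, cons_val, Pi.add_apply, Pi.smul_apply, smul_eq_mul] <;>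
    ring

/-- The axial vector of a `3 × 3` matrix `B`: it encodes the alternating form
`x ⬝ᵥ B *ᵥ y - y ⬝ᵥ B *ᵥ x` as the dot product with `x ⨯₃ y`, see `axial_dotProduct_cross`. -/
def axial (B : Matrix (Fin 3) (Fin 3) R) : Fin 3 → R :=
  ![B 1 2 - B 2 1, B 2 0 - B 0 2, B 0 1 - B 1 0]

theorem axial_dotProduct_cross (B : Matrix (Fin 3) (Fin 3) R) (x y : Fin 3 → R) :
    axial B ⬝ᵥ x ⨯₃ y = x ⬝ᵥ B *ᵥ y - y ⬝ᵥ B *ᵥ x := by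
  simp only [axial, cross_apply, mulVec, dotProduct, Fin.sum_univ_three, cons_val]
  ring

end CrossProduct

/-- A coordinate model of the even Clifford algebra of the ternary form `x ↦ x ⬝ᵥ B *ᵥ x`. The
product of the vectors `x` and `y` is represented by scalar part `x ⬝ᵥ B *ᵥ y` and vector part
`x ⨯₃ y`, see `TernaryEven.vecMul`. -/
@[ext]
structure TernaryEven {R : Type*} (B : Matrix (Fin 3) (Fin 3) R) where
  /-- The scalar part. -/
  re : R
  /-- The vector part. -/
  im : Fin 3 → R

namespace TernaryEven

variable {R : Type*} [CommRing R] {B : Matrix (Fin 3) (Fin 3) R}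

/-- The equivalence along which the module structure is transported. -/
def equivProd (B : Matrix (Fin 3) (Fin 3) R) : TernaryEven B ≃ R × (Fin 3 → R) where
  toFun x := (x.re, x.im)
  invFun y := ⟨y.1, y.2⟩

instance : AddCommGroup (TernaryEven B) := (equivProd B).addCommGroup

instance : Module R (TernaryEven B) := (equivProd B).module R

instance : One (TernaryEven B) := ⟨⟨1, 0⟩⟩

/-- The unique bilinear multiplication with unit `⟨1, 0⟩` for which the products of two vectors
satisfy the Clifford relation `(x y) (y z) = (y ⬝ᵥ B *ᵥ y) • (x z)`, see `vecMul_mul_vecMul`. -/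
instance : Mul (TernaryEven B) where
  mul x y :=
    ⟨x.re * y.re - x.im ⬝ᵥ B.adjugateᵀ *ᵥ y.im,
      x.re • y.im + y.re • x.im - (axial B ⬝ᵥ y.im) • x.im - B *ᵥ x.im ⨯₃ y.im⟩

section Components

variable (r : R) (x y : TernaryEven B)

@[simp] theorem re_zero : (0 : TernaryEven B).re = 0 := rfl

@[simp] theorem im_zero : (0 : TernaryEven B).im = 0 := rfl

@[simp] theorem re_add : (x + y).re = x.re + y.re := rfl

@[simp] theorem im_add : (x + y).im = x.im + y.im := rfl

@[simp] theorem re_smul : (r • x).re = r * x.re := rfl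

@[simp] theorem im_smul : (r • x).im = r • x.im := rfl

@[simp] theorem re_one : (1 : TernaryEven B).re = 1 := rfl

@[simp] theorem im_one : (1 : TernaryEven B).im = 0 := rfl

@[simp] theorem re_mul :
    (x * y).re = x.re * y.re - x.im ⬝ᵥ B.adjugateᵀ *ᵥ y.im := rfl

@[simp] theorem im_mul :
    (x * y).im =
      x.re • y.im + y.re • x.im - (axial B ⬝ᵥ y.im) • x.im - B *ᵥ x.im ⨯₃ y.im := rfl

end Components

protected theorem mul_assoc (x y z : TernaryEven B) : x * y * z = x * (y * z) := by
  ext i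
  · simp only [re_mul, im_mul, axial, cross_apply, mulVec, dotProduct, transpose_apply, of_apply,
      adjugate_fin_three, Fin.sum_univ_three, cons_val', cons_val, Pi.sub_apply, Pi.add_apply,
      Pi.smul_apply, smul_eq_mul]
    ring
  · fin_cases i <;>
      simp only [Fin.zero_eta, Fin.mk_one, Fin.reduceFinMk, re_mul, im_mul, axial, cross_apply,
        mulVec, dotProduct, transpose_apply, of_apply, adjugate_fin_three, Fin.sum_univ_three,
        cons_val', cons_val, Pi.sub_apply, Pi.add_apply, Pi.smul_apply, smul_eq_mul] <;>
      ring

instance : Ring (TernaryEven B) where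
  __ := (equivProd B).addCommGroup
  left_distrib x y z := by
    ext1
    · simp only [re_mul, re_add, mul_add, im_add, mulVec_add, dotProduct_add]
      ring
    · simp only [im_mul, im_add, smul_add, re_add, add_smul, dotProduct_add, map_add, mulVec_add]
      module
  right_distrib x y z := by
    ext1
    · simp only [re_mul, re_add, add_mul, im_add, add_dotProduct]
      ring
    · simp only [im_mul, re_add, add_smul, im_add, smul_add, map_add, LinearMap.add_apply,
        mulVec_add]
      module
  zero_mul x := by ext1 <;> simp
  mul_zero x := by ext1 <;> simp
  one_mul x := by ext1 <;> simp
  mul_one x := by ext1 <;> simp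
  mul_assoc := TernaryEven.mul_assoc

instance : Algebra R (TernaryEven B) :=
  Algebra.ofModule
    (fun r x y ↦ by
      ext1
      · simp only [re_mul, re_smul, im_smul, smul_dotProduct, smul_eq_mul]
        ring
      · simp only [im_mul, re_smul, im_smul, map_smul, LinearMap.smul_apply, mulVec_smul]
        module)
    (fun r x y ↦ by
      ext1
      · simp only [re_mul, re_smul, im_smul, mulVec_smul, dotProduct_smul, smul_eq_mul]
        ring
      · simp only [im_mul, re_smul, im_smul, dotProduct_smul, smul_eq_mul, map_smul, mulVec_smul]
        module)

theorem algebraMap_eq (r : R) : algebraMap R (TernaryEven B) r = ⟨r, 0⟩ := by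
  ext1 <;> simp [Algebra.algebraMap_eq_smul_one]

/-- The vector part as a linear map; it identifies the quotient by the scalars with `R³`. -/
def imL : TernaryEven B →ₗ[R] Fin 3 → R where
  toFun := im
  map_add' := im_add
  map_smul' := im_smul

@[simp] theorem imL_apply (x : TernaryEven B) : imL x = x.im := rfl

variable (B) in
/-- The elements with scalar part zero. This copy of `R³` is not the odd space of vectors of the
Clifford algebra, whose products are given by `vecMul`. -/
def ofVec : (Fin 3 → R) →ₗ[R] TernaryEven B where
  toFun v := ⟨0, v⟩
  map_add' _ _ := by ext1 <;> simp
  map_smul' _ _ := by ext1 <;> simp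

@[simp] theorem re_ofVec (v : Fin 3 → R) : (ofVec B v).re = 0 := rfl

@[simp] theorem im_ofVec (v : Fin 3 → R) : (ofVec B v).im = v := rfl

theorem eq_smul_one_add_ofVec (x : TernaryEven B) : x = x.re • 1 + ofVec B x.im := by
  ext1 <;> simp

variable (B) in
/-- The product of two vectors of the quadratic space `R³`, as an element of the even algebra. -/
def vecMul : (Fin 3 → R) →ₗ[R] (Fin 3 → R) →ₗ[R] TernaryEven B :=
  LinearMap.mk₂ R (fun x y ↦ ⟨x ⬝ᵥ B *ᵥ y, x ⨯₃ y⟩)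
    (fun _ _ _ ↦ by ext1 <;> simp)
    (fun _ _ _ ↦ by ext1 <;> simp)
    (fun _ _ _ ↦ by ext1 <;> simp [mulVec_add])
    (fun _ _ _ ↦ by ext1 <;> simp [mulVec_smul])

@[simp] theorem re_vecMul (x y : Fin 3 → R) : (vecMul B x y).re = x ⬝ᵥ B *ᵥ y := rfl

@[simp] theorem im_vecMul (x y : Fin 3 → R) : (vecMul B x y).im = x ⨯₃ y := rfl

theorem vecMul_self (x : Fin 3 → R) :
    vecMul B x x = algebraMap R (TernaryEven B) (B.toQuadraticForm' x) := by
  ext1 <;> simp [algebraMap_eq, toQuadraticForm'_apply]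

theorem vecMul_mul_vecMul (x y z : Fin 3 → R) :
    vecMul B x y * vecMul B y z = B.toQuadraticForm' y • vecMul B x z := by
  rw [toQuadraticForm'_apply]
  ext1
  · rw [re_mul, im_vecMul, im_vecMul, ← mulVec_cross_mulVec, cross_dot_cross]
    simp only [re_vecMul, re_smul]
    ring
  · have h_cross : (x ⨯₃ y) ⨯₃ (y ⨯₃ z) = (x ⬝ᵥ y ⨯₃ z) • y := by
      simp [cross_cross_eq_smul_sub_smul]
    have h_expand := triple_product_smul x y z (B *ᵥ y)
    rw [im_mul, im_vecMul, im_vecMul, axial_dotProduct_cross, h_cross, mulVec_smul, h_expand,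
      im_smul, im_vecMul, ← cross_anticomm x z]
    simp only [re_vecMul, dotProduct_comm (B *ᵥ y)]
    module

theorem cross_dotProduct_im_mul (x y : TernaryEven B) :
    x.im ⨯₃ y.im ⬝ᵥ (x * y).im = -B.toQuadraticForm' (x.im ⨯₃ y.im) := by
  simp [toQuadraticForm'_apply, dotProduct_comm _ x.im, dotProduct_comm _ y.im]

theorem ofVec_cross (x y : Fin 3 → R) :
    ofVec B (x ⨯₃ y) = vecMul B x y - (x ⬝ᵥ B *ᵥ y) • 1 := by
  rw [eq_sub_iff_add_eq', eq_smul_one_add_ofVec (vecMul B x y), re_vecMul, im_vecMul]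

theorem linearMap_ext {N : Type*} [AddCommGroup N] [Module R N] {φ ψ : TernaryEven B →ₗ[R] N}
    (h_one : φ 1 = ψ 1)
    (h_single : ∀ i, φ (ofVec B (Pi.single i 1)) = ψ (ofVec B (Pi.single i 1))) : φ = ψ := by
  have h_vec : φ ∘ₗ ofVec B = ψ ∘ₗ ofVec B :=
    (Pi.basisFun R (Fin 3)).ext fun i ↦ by simpa using h_single i
  ext x
  rw [eq_smul_one_add_ofVec x, map_add, map_add, map_smul, map_smul, h_one]
  exact congrArg _ (LinearMap.congr_fun h_vec x.im)

section EvenEquiv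

variable (B)

/-- The even Clifford map into the model that sends a pair of vectors to their product. -/
def evenHom : EvenHom B.toQuadraticForm' (TernaryEven B) where
  bilin := vecMul B
  contract := vecMul_self
  contract_mid := vecMul_mul_vecMul

/-- The exterior product of two vectors, realized in the even Clifford algebra by subtracting from
their Clifford product its scalar part with respect to `B`. -/
noncomputable def wedge : (Fin 3 → R) →ₗ[R] (Fin 3 → R) →ₗ[R] even B.toQuadraticForm' :=
  (even.ι B.toQuadraticForm').bilin - (toLinearMap₂' R B).compr₂ (LinearMap.toSpanSingleton R _ 1)

theorem wedge_apply (x y : Fin 3 → R) :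
    wedge B x y = (even.ι B.toQuadraticForm').bilin x y - (x ⬝ᵥ B *ᵥ y) • 1 := by
  simp [wedge, toLinearMap₂'_apply']

theorem isAlt_wedge : (wedge B).IsAlt := fun x ↦ by
  rw [wedge_apply, EvenHom.contract, toQuadraticForm'_apply, Algebra.algebraMap_eq_smul_one,
    sub_self]

/-- The linear map from the model to the even Clifford algebra that sends `⟨0, x ⨯₃ y⟩` to
`wedge B x y`. -/
noncomputable def toEvenₗ : TernaryEven B →ₗ[R] even B.toQuadraticForm' where
  toFun x := x.re • 1 + ∑ i, x.im i • wedge B (Pi.single (i + 1) 1) (Pi.single (i + 2) 1)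
  map_add' x y := by
    simp only [re_add, im_add, Pi.add_apply, add_smul, Finset.sum_add_distrib]
    abel
  map_smul' r x := by simp [mul_smul, Finset.smul_sum]

theorem toEvenₗ_one : toEvenₗ B 1 = 1 := by simp [toEvenₗ]

theorem toEvenₗ_vecMul (x y : Fin 3 → R) :
    toEvenₗ B (vecMul B x y) = (even.ι B.toQuadraticForm').bilin x y := by
  have h_wedge := isAlt_apply_eq_sum_cross (isAlt_wedge B) x y
  rw [wedge_apply, sub_eq_iff_eq_add'] at h_wedge
  exact h_wedge.symm

theorem toEvenₗ_mul (p q : TernaryEven B) :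
    toEvenₗ B (p * q) = toEvenₗ B p * toEvenₗ B q := by
  revert p q
  rw [LinearMap.map_mul_iff]
  refine linearMap_ext (by ext : 1; simp [toEvenₗ_one]) fun i ↦
    linearMap_ext (by simp [toEvenₗ_one]) fun j ↦ ?_
  -- A common middle vector makes the Clifford relation `(x y) (y z) = Q(y) x z` applicable.
  obtain ⟨x, y, z, hx, hz⟩ := exists_cross_eq_single_and_cross_eq_single (R := R) i j
  simp [← hx, ← hz, ofVec_cross, mul_sub, toEvenₗ_one, toEvenₗ_vecMul,
    vecMul_mul_vecMul, EvenHom.contract_mid]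

/-- The even Clifford algebra of `x ↦ x ⬝ᵥ B *ᵥ x` is isomorphic to its coordinate model. -/
noncomputable def evenEquiv : even B.toQuadraticForm' ≃ₐ[R] TernaryEven B :=
  AlgEquiv.ofAlgHom (even.lift _ (evenHom B))
    (AlgHom.ofLinearMap (toEvenₗ B) (toEvenₗ_one B) (toEvenₗ_mul B))
    (by
      apply AlgHom.toLinearMap_injective
      refine linearMap_ext (by simp [toEvenₗ_one]) fun i ↦ ?_
      obtain ⟨x, y, -, hx, -⟩ := exists_cross_eq_single_and_cross_eq_single (R := R) i i
      simp [← hx, ofVec_cross, toEvenₗ_one, toEvenₗ_vecMul, evenHom])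
    (by
      ext x y
      simp [evenHom, toEvenₗ_vecMul])

end EvenEquiv

section Hom

variable {C D : Matrix (Fin 3) (Fin 3) R}

/-- The matrix of the linear map induced by an algebra homomorphism on the quotients by the
scalars, which `im` identifies with `R³`. -/
noncomputable def imMatrix (φ : TernaryEven B →ₐ[R] TernaryEven C) : Matrix (Fin 3) (Fin 3) R :=
  LinearMap.toMatrix' (imL ∘ₗ φ.toLinearMap ∘ₗ ofVec B)

theorem imMatrix_mulVec_im (φ : TernaryEven B →ₐ[R] TernaryEven C) (x : TernaryEven B) :
    imMatrix φ *ᵥ x.im = (φ x).im := by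
  conv_rhs => rw [eq_smul_one_add_ofVec x]
  simp [imMatrix, LinearMap.toMatrix'_mulVec]

theorem imMatrix_comp (ψ : TernaryEven C →ₐ[R] TernaryEven D)
    (φ : TernaryEven B →ₐ[R] TernaryEven C) :
    imMatrix (ψ.comp φ) = imMatrix ψ * imMatrix φ := by
  refine ext_iff_mulVec.mpr fun v ↦ ?_
  rw [← mulVec_mulVec, ← im_ofVec (B := B) v, imMatrix_mulVec_im, imMatrix_mulVec_im,
    imMatrix_mulVec_im, AlgHom.comp_apply]

theorem imMatrix_id : imMatrix (AlgHom.id R (TernaryEven B)) = 1 :=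
  ext_iff_mulVec.mpr fun v ↦ by simpa using imMatrix_mulVec_im (AlgHom.id R _) (ofVec B v)

theorem isUnit_det_imMatrix (φ : TernaryEven B ≃ₐ[R] TernaryEven C) :
    IsUnit (imMatrix (φ : TernaryEven B →ₐ[R] TernaryEven C)).det := by
  refine isUnit_det_of_left_inverse (B := imMatrix (φ.symm : TernaryEven C →ₐ[R] TernaryEven B)) ?_
  rw [← imMatrix_comp, AlgEquiv.symm_comp, imMatrix_id]

theorem det_imMatrix_smul (φ : TernaryEven B →ₐ[R] TernaryEven C) :
    (imMatrix φ).det • B.toQuadraticForm' =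
      C.toQuadraticForm'.comp (toLin' (imMatrix φ).adjugateᵀ) := by
  have h_cross (p q : Fin 3 → R) :
      (imMatrix φ).det * B.toQuadraticForm' (p ⨯₃ q) =
        C.toQuadraticForm' ((imMatrix φ).adjugateᵀ *ᵥ (p ⨯₃ q)) := by
    have h_target := cross_dotProduct_im_mul (φ (ofVec B p)) (φ (ofVec B q))
    rw [← map_mul] at h_target
    simp only [← imMatrix_mulVec_im] at h_target
    rw [mulVec_cross_mulVec_dotProduct, cross_dotProduct_im_mul, mul_neg, neg_inj,
      mulVec_cross_mulVec] at h_target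
    exact h_target
  have h_unit (z : Fin 3 → R) {i : Fin 3} (hz : z i = 1) :
      ((imMatrix φ).det • B.toQuadraticForm') z =
        C.toQuadraticForm'.comp (toLin' (imMatrix φ).adjugateᵀ) z := by
    obtain ⟨p, q, rfl⟩ := exists_cross_eq_of_apply_eq_one hz
    simpa using h_cross p q
  -- Over a general ring not every vector is a cross product, but those with a coordinate 1 are.
  refine quadraticMap_ext_basis (Pi.basisFun R (Fin 3)) (fun i ↦ h_unit _ (i := i) (by simp))
    fun i j hij ↦ h_unit _ (i := i) (by simp [hij])

theorem exists_unit_smul_equivalent (φ : TernaryEven B ≃ₐ[R] TernaryEven C) :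
    ∃ u : Rˣ, ((u : R) • B.toQuadraticForm').Equivalent C.toQuadraticForm' := by
  set P := imMatrix (φ : TernaryEven B →ₐ[R] TernaryEven C)
  obtain ⟨u, hu⟩ : IsUnit P.det := isUnit_det_imMatrix φ
  have h_unit : IsUnit (P.adjugateᵀ).det := by
    rw [det_transpose, det_adjugate, ← hu]
    exact u.isUnit.pow _
  refine ⟨u, ⟨⟨toLinearEquiv' P.adjugateᵀ (invertibleOfIsUnitDet _ h_unit), fun z ↦ ?_⟩⟩⟩
  rw [hu, det_imMatrix_smul]
  rfl

end Hom

end TernaryEven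

section Similitude

variable {R M₁ M₂ : Type*} [CommRing R] [AddCommGroup M₁] [Module R M₁] [AddCommGroup M₂]
  [Module R M₂] {Q₁ : QuadraticForm R M₁} {Q₂ : QuadraticForm R M₂}

/-- The even Clifford map `(x, y) ↦ u⁻¹ e(x) e(y)` induced by a linear map `e` that multiplies the
form by the unit `u`. -/
def similitudeEvenHom (u : Rˣ) (e : M₁ →ₗ[R] M₂) (he : ∀ x, Q₂ (e x) = u * Q₁ x) :
    EvenHom Q₁ (even Q₂) where
  bilin := (↑u⁻¹ : R) • (even.ι Q₂).bilin.compl₁₂ e e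
  contract x := by
    simp [EvenHom.contract, he, ← Algebra.smul_def, smul_smul]
  contract_mid x y z := by
    simp [EvenHom.contract_mid, he, smul_smul, mul_comm]

/-- The isomorphism of even Clifford algebras induced by a similitude with multiplier `u`. -/
def evenEquivOfSimilitude (u : Rˣ) (e : M₁ ≃ₗ[R] M₂) (he : ∀ x, Q₂ (e x) = u * Q₁ x) :
    even Q₁ ≃ₐ[R] even Q₂ :=
  AlgEquiv.ofAlgHom
    (even.lift Q₁ (similitudeEvenHom u e he))
    (even.lift Q₂ (similitudeEvenHom u⁻¹ e.symm fun y ↦ by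
      rw [Units.eq_inv_mul_iff_mul_eq, ← he]
      exact congrArg Q₂ (e.apply_symm_apply y)))
    (by ext; simp [similitudeEvenHom, smul_smul])
    (by ext; simp [similitudeEvenHom, smul_smul])

end Similitude

end TernaryClifford

open TernaryClifford in
theorem stmt_10_general {R : Type*} [CommRing R] (f g : QuadraticForm R (Fin 3 → R)) :
    (∃ u : Rˣ, ((u : R) • f).Equivalent g) ↔
      Nonempty (CliffordAlgebra.even f ≃ₐ[R] CliffordAlgebra.even g) := by
  constructor
  · rintro ⟨u, ⟨e⟩⟩
    exact ⟨evenEquivOfSimilitude u e.toLinearEquiv e.map_app⟩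
  · rintro ⟨φ⟩
    obtain ⟨B, rfl⟩ := toQuadraticForm'_surjective f
    obtain ⟨C, rfl⟩ := toQuadraticForm'_surjective g
    exact TernaryEven.exists_unit_smul_equivalent
      ((TernaryEven.evenEquiv B).symm.trans (φ.trans (TernaryEven.evenEquiv C)))

theorem stmt_10 (R : Type*) [CommRing R] [IsDomain R] [IsPrincipalIdealRing R]
    (K : Type*) [Field K] [Algebra R K] [IsFractionRing R K] (hchar : ringChar K ≠ 2)
    (f g : QuadraticForm R (Fin 3 → R))
    (hf : (gramMatrix f).det ≠ 0) (hg : (gramMatrix g).det ≠ 0) :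
    (∃ u : Rˣ, ((u : R) • f).Equivalent g) ↔
      Nonempty (CliffordAlgebra.even f ≃ₐ[R] CliffordAlgebra.even g) :=
  stmt_10_general f g
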